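/- Let R ⊆ ℝ^d × (ℕ→ℕ) be an analytic (Σ¹₁) relation whose domain dom(R) = {x : ∃y R(x,y)} has Hausdorff dimension at least δ. Then for every δ' < δ there exist a compact set K ⊆ dom(R) with dimH(K) ≥ δ' and a continuous function f : K → (ℕ→ℕ) which uniformizes R on K, i.e. (x, f(x)) ∈ R for every x ∈ K. -/

import Mathlib

/-!
The relation is the image of a continuous `g` on Baire space, so its domain is the image of the
first component `h` of `g`. Fix `s` strictly between `δ'` and the dimension of the domain, and let
`content s` be the least total weight `∑ (2⁻ᵏ)ˢ` of a covering by half-open dyadic cubes. It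
vanishes only on sets of `s`-dimensional Hausdorff measure zero (`hausdorffMeasure_eq_zero`), so it
is positive on the domain.

Since dyadic cubes are nested or disjoint, this content is strongly subadditive, and therefore
continuous along increasing sequences of arbitrary sets (`content_iUnion_of_monotone`). Bounding
the coordinates of the parameter one after the other, as in Choquet's capacitability theorem, gives
a compact `C` in Baire space such that `h '' C` has positive content
(`exists_compact_content_pos`). Frostman's lemma (`exists_frostman`) puts on `h '' C` a probability
measure `μ` whose mass on a ball of radius `2⁻ᵏ` is at most a constant times `(2⁻ᵏ)ˢ`; it is a weak
limit of measures that obey the bound at finitely many levels.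

A Lusin-type argument (`exists_compact_injOn`) discards a small amount of `μ`-mass for each
coordinate `n`, so that on the remaining compact parameter set the `n`-th coordinate is a function
of the image point. In the limit there is a compact `D ⊆ C` on which `h` is injective and with
`μ (h '' D) > 0`. The set `K = h '' D` has positive `s`-dimensional Hausdorff measure by the mass
distribution principle (`hausdorffMeasure_ne_zero`), and `h` restricts to a homeomorphism `D → K`;
its inverse followed by the second component of `g` is the required uniformization.
-/

open MeasureTheory Set ENNReal

open Filter Topology

noncomputable section

namespace AnalyticUniformization

/-- Euclidean `d`-space. -/
abbrev Space (d : ℕ) : Type := EuclideanSpace ℝ (Fin d)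

/-- Indices of dyadic cubes: a level `k : ℕ` together with an integer corner. -/
abbrev Index (d : ℕ) : Type := ℕ × (Fin d → ℤ)

variable {d : ℕ}

/-! ### Dyadic cubes -/

/-- The half-open dyadic cube of side `2⁻ᵏ` and lower corner `2⁻ᵏ z`, where `q = (k, z)`. -/
def cube (q : Index d) : Set (Space d) := {x | ∀ i, ⌊(2 : ℝ) ^ q.1 * x i⌋ = q.2 i}

/-- The index of the cube of level `k` containing `x`. -/
def code (k : ℕ) (x : Space d) : Index d := (k, fun i => ⌊(2 : ℝ) ^ k * x i⌋)

lemma mem_cube_code (k : ℕ) (x : Space d) : x ∈ cube (code k x) := fun _ => rfl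

lemma mem_cube_iff {q : Index d} {x : Space d} : x ∈ cube q ↔ code q.1 x = q := by
  constructor
  · intro h
    exact Prod.ext rfl (funext h)
  · intro h
    rw [← h]
    exact mem_cube_code _ _

lemma eq_of_mem_cube {q q' : Index d} {x : Space d} (h : x ∈ cube q) (h' : x ∈ cube q')
    (hl : q.1 = q'.1) : q = q' := by
  rw [mem_cube_iff] at h h'
  rw [← h, ← h', hl]

lemma floor_coarse {k l : ℕ} (hkl : k ≤ l) (a : ℝ) :
    ⌊(2 : ℝ) ^ k * a⌋ = ⌊(2 : ℝ) ^ l * a⌋ / ((2 ^ (l - k) : ℕ) : ℤ) := by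
  rw [← Int.floor_div_natCast]
  congr 1
  obtain ⟨m, rfl⟩ := Nat.exists_eq_add_of_le hkl
  have : (2 : ℝ) ^ m ≠ 0 := by positivity
  push_cast
  rw [Nat.add_sub_cancel_left, pow_add]
  field_simp

/-- The net property: two dyadic cubes that meet are nested. -/
lemma cube_subset {q q' : Index d} {x : Space d} (h : x ∈ cube q) (h' : x ∈ cube q')
    (hl : q.1 ≤ q'.1) : cube q' ⊆ cube q := by
  intro y hy i
  rw [floor_coarse hl, hy i, ← h' i, ← floor_coarse hl]
  exact h i

lemma measurableSet_cube (q : Index d) : MeasurableSet (cube q) := by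
  have : cube q = ⋂ i, (fun x : Space d => ⌊(2 : ℝ) ^ q.1 * x i⌋) ⁻¹' {q.2 i} := by
    ext x
    simp [cube]
  rw [this]
  refine MeasurableSet.iInter fun i => ?_
  have hm : Measurable fun x : Space d => ⌊(2 : ℝ) ^ q.1 * x i⌋ := by
    apply Int.measurable_floor.comp
    fun_prop
  exact hm (measurableSet_singleton _)

/-- The relative positions of a cube and its neighbours of the same level. -/
def nbrs (d : ℕ) : Finset (Fin d → ℤ) := Finset.Icc (fun _ => -1) (fun _ => 1)

/-- Translation of indices within a level. -/
def shift (v : Fin d → ℤ) (q : Index d) : Index d := (q.1, q.2 + v)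

lemma exists_nbr {q : Index d} {x y : Space d} (hx : x ∈ cube q)
    (hxy : dist x y < (2⁻¹ : ℝ) ^ q.1) : ∃ v ∈ nbrs d, y ∈ cube (shift v q) := by
  have key (i : Fin d) : |(2 : ℝ) ^ q.1 * y i - (2 : ℝ) ^ q.1 * x i| < 1 := by
    have h1 : |x i - y i| ≤ dist x y := by
      rw [dist_eq_norm]
      exact PiLp.norm_apply_le (x - y) i
    have h2 : (0 : ℝ) < 2 ^ q.1 := by positivity
    rw [← mul_sub, abs_mul, abs_of_pos h2, abs_sub_comm]
    calc (2 : ℝ) ^ q.1 * |x i - y i| < 2 ^ q.1 * (2⁻¹ : ℝ) ^ q.1 := by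
          gcongr
          exact h1.trans_lt hxy
      _ = 1 := by rw [← mul_pow]; norm_num
  refine ⟨fun i => ⌊(2 : ℝ) ^ q.1 * y i⌋ - q.2 i, ?_, fun i => ?_⟩
  · rw [nbrs, Finset.mem_Icc]
    constructor
    · intro i
      have := (abs_lt.1 (key i)).1
      have hx' := hx i
      rw [Int.floor_eq_iff] at hx'
      have : q.2 i - 1 ≤ ⌊(2 : ℝ) ^ q.1 * y i⌋ := by
        rw [Int.le_floor]
        push_cast
        linarith
      simp only
      linarith
    · intro i
      have := (abs_lt.1 (key i)).2
      have hx' := hx i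
      rw [Int.floor_eq_iff] at hx'
      have : ⌊(2 : ℝ) ^ q.1 * y i⌋ < q.2 i + 2 := by
        rw [Int.floor_lt]
        push_cast
        linarith
      simp only
      linarith
  · simp [shift]

lemma ediam_cube_le (q : Index d) : Metric.ediam (cube q) ≤ (d : ℝ≥0∞) * (2⁻¹ : ℝ≥0∞) ^ q.1 := by
  apply Metric.ediam_le
  intro x hx y hy
  have key (i : Fin d) : (x i - y i) ^ 2 ≤ ((2⁻¹ : ℝ) ^ q.1) ^ 2 := by
    have hx' := hx i
    have hy' := hy i
    rw [Int.floor_eq_iff] at hx' hy'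
    have h2 : (0 : ℝ) < 2 ^ q.1 := by positivity
    apply sq_le_sq'
    · rw [inv_pow, neg_le_sub_iff_le_add, inv_eq_one_div, ← sub_le_iff_le_add', le_div_iff₀ h2]
      nlinarith
    · rw [inv_pow, inv_eq_one_div, le_div_iff₀ h2]
      nlinarith
  have hdist : dist x y ≤ d * (2⁻¹ : ℝ) ^ q.1 := by
    rw [EuclideanSpace.dist_eq]
    apply Real.sqrt_le_iff.2 ⟨by positivity, ?_⟩
    have h1 : ∑ i, dist (x i) (y i) ^ 2 ≤ ∑ _i : Fin d, ((2⁻¹ : ℝ) ^ q.1) ^ 2 := by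
      apply Finset.sum_le_sum
      intro i _
      rw [Real.dist_eq, sq_abs]
      exact key i
    rw [Finset.sum_const, Finset.card_univ, Fintype.card_fin, nsmul_eq_mul] at h1
    refine h1.trans ?_
    rw [mul_pow]
    gcongr
    have : (d : ℕ) ≤ d ^ 2 := Nat.le_self_pow (by norm_num) d
    exact_mod_cast this
  rw [edist_dist]
  refine (ENNReal.ofReal_le_ofReal hdist).trans ?_
  rw [ENNReal.ofReal_mul (by positivity), ENNReal.ofReal_pow (by positivity),
    ENNReal.ofReal_inv_of_pos (by norm_num)]
  simp

/-! ### The dyadic net content -/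

/-- The weight `(2⁻ᵏ)ˢ` of a cube of level `k`. -/
def weight (s : ℝ) (k : ℕ) : ℝ≥0∞ := ((2⁻¹ : ℝ≥0∞) ^ k) ^ s

lemma weight_pos (s : ℝ) (k : ℕ) : 0 < weight s k := by
  apply ENNReal.rpow_pos
  · exact ENNReal.pow_pos (by simp) k
  · exact ENNReal.pow_ne_top (by simp)

lemma weight_ne_top {s : ℝ} (hs : 0 < s) (k : ℕ) : weight s k ≠ ∞ :=
  ENNReal.rpow_ne_top_of_nonneg hs.le (ENNReal.pow_ne_top (by simp))

lemma weight_anti {s : ℝ} (hs : 0 < s) : Antitone (weight s) := by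
  intro k l h
  apply ENNReal.rpow_le_rpow _ hs.le
  exact pow_le_pow_of_le_one (by simp) (by simp) h

lemma tendsto_weight {s : ℝ} (hs : 0 < s) : Tendsto (weight s) atTop (𝓝 0) := by
  have h1 : Tendsto (fun k : ℕ => (2⁻¹ : ℝ≥0∞) ^ k) atTop (𝓝 0) :=
    ENNReal.tendsto_pow_atTop_nhds_zero_of_lt_one (by simp)
  have h2 := (ENNReal.continuous_rpow_const (y := s)).tendsto 0
  rw [ENNReal.zero_rpow_of_pos hs] at h2
  exact h2.comp h1

/-- The total weight of a family of cubes, as a measure on the set of indices. -/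
def cost (d : ℕ) (s : ℝ) : Measure (Index d) :=
  Measure.sum fun q : Index d => weight s q.1 • Measure.dirac q

lemma cost_eq_tsum (s : ℝ) (F : Set (Index d)) : cost d s F = ∑' q : F, weight s q.1.1 := by
  rw [cost, Measure.sum_apply _ (MeasurableSet.of_discrete), tsum_subtype F (fun q => weight s q.1)]
  congr 1
  ext q
  by_cases h : q ∈ F <;> simp [h]

lemma weight_le_cost (s : ℝ) {F : Set (Index d)} {q : Index d} (h : q ∈ F) :
    weight s q.1 ≤ cost d s F := by
  rw [cost_eq_tsum]
  exact ENNReal.le_tsum (f := fun q : F => weight s q.1.1) ⟨q, h⟩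

lemma cost_shift (s : ℝ) (v : Fin d → ℤ) (F : Set (Index d)) :
    cost d s (shift v '' F) = cost d s F := by
  have hinj : InjOn (shift v) F := by
    rintro ⟨k, z⟩ _ ⟨l, w⟩ _ h
    simpa [shift] using h
  rw [cost_eq_tsum, cost_eq_tsum, tsum_image (fun q : Index d => weight s q.1) hinj]
  rfl

/-- The region covered by a family of cubes. -/
def region (F : Set (Index d)) : Set (Space d) := ⋃ q ∈ F, cube q

lemma mem_region {F : Set (Index d)} {x : Space d} : x ∈ region F ↔ ∃ q ∈ F, x ∈ cube q := by
  simp [region]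

/-- The `s`-dimensional dyadic net content: the least total weight of a covering by dyadic cubes
of side at most one. -/
def content (s : ℝ) (A : Set (Space d)) : ℝ≥0∞ :=
  ⨅ (F : Set (Index d)) (_ : A ⊆ region F), cost d s F

lemma content_le (s : ℝ) {A : Set (Space d)} {F : Set (Index d)} (h : A ⊆ region F) :
    content s A ≤ cost d s F := iInf₂_le F h

lemma exists_cover {s : ℝ} {A : Set (Space d)} {r : ℝ≥0∞} (h : content s A < r) :
    ∃ F : Set (Index d), A ⊆ region F ∧ cost d s F < r := by
  simpa [content, iInf_lt_iff] using h

lemma content_mono (s : ℝ) {A B : Set (Space d)} (h : A ⊆ B) : content s A ≤ content s B :=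
  le_iInf₂ fun _ hF => content_le s (h.trans hF)

lemma content_cube_le (s : ℝ) {A : Set (Space d)} {q : Index d} (h : A ⊆ cube q) :
    content s A ≤ weight s q.1 := by
  refine (content_le s (F := {q}) (h.trans ?_)).trans ?_
  · simp [region]
  · rw [cost_eq_tsum, tsum_singleton q (fun q : Index d => weight s q.1)]

lemma content_iUnion_le {ι : Type} [Countable ι] (s : ℝ) (A : ι → Set (Space d)) :
    content s (⋃ i, A i) ≤ ∑' i, content s (A i) := by
  refine ENNReal.le_of_forall_pos_le_add fun ε hε hfin => ?_
  obtain ⟨ε', hε', hsum⟩ := ENNReal.exists_pos_sum_of_countable (ENNReal.coe_ne_zero.2 hε.ne') ι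
  have hlt (i : ι) : content s (A i) < content s (A i) + ε' i :=
    ENNReal.lt_add_right (ENNReal.ne_top_of_tsum_ne_top hfin.ne i)
      (ENNReal.coe_ne_zero.2 (hε' i).ne')
  choose F hF hFc using fun i => exists_cover (hlt i)
  calc content s (⋃ i, A i) ≤ cost d s (⋃ i, F i) := by
        apply content_le
        apply iUnion_subset
        intro i x hx
        obtain ⟨q, hq, hxq⟩ := mem_region.1 (hF i hx)
        exact mem_region.2 ⟨q, mem_iUnion.2 ⟨i, hq⟩, hxq⟩
    _ ≤ ∑' i, cost d s (F i) := measure_iUnion_le _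
    _ ≤ ∑' i, (content s (A i) + ε' i) := ENNReal.tsum_le_tsum fun i => (hFc i).le
    _ = ∑' i, content s (A i) + ∑' i, (ε' i : ℝ≥0∞) := ENNReal.tsum_add
    _ ≤ _ := by gcongr

/-- The members of a family of cubes not contained in a member of smaller level; for `d > 0`, those
not properly contained in another member. -/
def maximals (F : Set (Index d)) : Set (Index d) :=
  {q ∈ F | ∀ q' ∈ F, cube q ⊆ cube q' → q.1 ≤ q'.1}

lemma region_maximals (F : Set (Index d)) : region (maximals F) = region F := by
  classical
  apply Subset.antisymm
  · intro x hx
    obtain ⟨q, hq, hxq⟩ := mem_region.1 hx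
    exact mem_region.2 ⟨q, hq.1, hxq⟩
  · intro x hx
    -- the coarsest member containing `x` is maximal
    have hex : ∃ k, ∃ q ∈ F, x ∈ cube q ∧ q.1 = k := by
      obtain ⟨q, hq, hxq⟩ := mem_region.1 hx
      exact ⟨q.1, q, hq, hxq, rfl⟩
    obtain ⟨q, hq, hxq, hk⟩ := Nat.find_spec hex
    refine mem_region.2 ⟨q, ⟨hq, fun q' hq' hsub => ?_⟩, hxq⟩
    rw [hk]
    exact Nat.find_min' hex ⟨q', hq', hsub hxq, rfl⟩

/-- Strong subadditivity at the level of coverings. If `F` covers `A` and `G` covers `B ⊇ A`, then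
the maximal cubes of `F ∪ G` cover `B`, while the discarded cubes, counted with multiplicity,
still cover `A`. -/
lemma content_add_cost_maximals_le (s : ℝ) {A B : Set (Space d)} {F G : Set (Index d)}
    (hAB : A ⊆ B) (hF : A ⊆ region F) (hG : B ⊆ region G) :
    content s A + cost d s (maximals (F ∪ G)) ≤ cost d s F + cost d s G := by
  set M := maximals (F ∪ G) with hM
  have hMs : M ⊆ F ∪ G := fun q hq => hq.1
  have hcov : A ⊆ region (((F ∪ G) \ M) ∪ (F ∩ G)) := by
    intro x hx
    obtain ⟨f, hf, hxf⟩ := mem_region.1 (hF hx)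
    obtain ⟨g, hg, hxg⟩ := mem_region.1 (hG (hAB hx))
    rcases lt_trichotomy f.1 g.1 with h | h | h
    · refine mem_region.2 ⟨g, Or.inl ⟨Or.inr hg, fun hgM => ?_⟩, hxg⟩
      exact absurd (hgM.2 f (Or.inl hf) (cube_subset hxf hxg h.le)) (not_le.2 h)
    · obtain rfl := eq_of_mem_cube hxf hxg h
      exact mem_region.2 ⟨f, Or.inr ⟨hf, hg⟩, hxf⟩
    · refine mem_region.2 ⟨f, Or.inl ⟨Or.inl hf, fun hfM => ?_⟩, hxf⟩
      exact absurd (hfM.2 g (Or.inr hg) (cube_subset hxg hxf h.le)) (not_le.2 h)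
  have h1 : cost d s ((F ∪ G) \ M) + cost d s M = cost d s (F ∪ G) := by
    have := measure_sdiff_add_inter (μ := cost d s) (F ∪ G) (t := M) .of_discrete
    rwa [inter_eq_self_of_subset_right hMs] at this
  calc content s A + cost d s M
      ≤ (cost d s ((F ∪ G) \ M) + cost d s (F ∩ G)) + cost d s M := by
        gcongr
        exact (content_le s hcov).trans (measure_union_le _ _)
    _ = cost d s (F ∪ G) + cost d s (F ∩ G) := by rw [← h1]; ring
    _ = cost d s F + cost d s G := measure_union_add_inter F .of_discrete

/-- The net content is continuous along increasing sequences of arbitrary sets. -/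
lemma content_iUnion_of_monotone (s : ℝ) {A : ℕ → Set (Space d)} (hA : Monotone A) :
    content s (⋃ n, A n) ≤ ⨆ n, content s (A n) := by
  refine ENNReal.le_of_forall_pos_le_add fun ε hε hfin => ?_
  obtain ⟨ε', hε', hsum⟩ := ENNReal.exists_pos_sum_of_countable (ENNReal.coe_ne_zero.2 hε.ne') ℕ
  have hne (n : ℕ) : content s (A n) ≠ ∞ :=
    ((le_iSup (fun n => content s (A n)) n).trans_lt hfin).ne
  have hlt (n : ℕ) : content s (A n) < content s (A n) + ε' n :=
    ENNReal.lt_add_right (hne n) (ENNReal.coe_ne_zero.2 (hε' n).ne')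
  choose F hF hFc using fun n => exists_cover (hlt n)
  let G : ℕ → Set (Index d) := fun n => Nat.rec (F 0) (fun n H => maximals (H ∪ F (n + 1))) n
  have hG0 : G 0 = F 0 := rfl
  have hGs (n : ℕ) : G (n + 1) = maximals (G n ∪ F (n + 1)) := rfl
  have hGcov (n : ℕ) : A n ⊆ region (G n) := by
    cases n with
    | zero => exact hF 0
    | succ n =>
      rw [hGs, region_maximals]
      intro x hx
      obtain ⟨q, hq, hxq⟩ := mem_region.1 (hF (n + 1) hx)
      exact mem_region.2 ⟨q, Or.inr hq, hxq⟩
  have hGsub (n : ℕ) : G n ⊆ ⋃ k, F k := by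
    induction n with
    | zero => exact subset_iUnion F 0
    | succ n ih =>
      intro q hq
      rcases hq.1 with h | h
      · exact ih h
      · exact mem_iUnion.2 ⟨n + 1, h⟩
  have hGcost (n : ℕ) :
      cost d s (G n) ≤ content s (A n) + ∑ k ∈ Finset.range (n + 1), (ε' k : ℝ≥0∞) := by
    induction n with
    | zero =>
      rw [hG0]
      simpa using (hFc 0).le
    | succ n ih =>
      have := content_add_cost_maximals_le s (hA n.le_succ) (hGcov n) (hF (n + 1))
      rw [← hGs] at this
      refine (ENNReal.add_le_add_iff_left (hne n)).1 (this.trans ?_)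
      calc cost d s (G n) + cost d s (F (n + 1))
          ≤ (content s (A n) + ∑ k ∈ Finset.range (n + 1), (ε' k : ℝ≥0∞))
            + (content s (A (n + 1)) + ε' (n + 1)) := add_le_add ih (hFc (n + 1)).le
        _ = _ := by rw [Finset.sum_range_succ _ (n + 1)]; ring
  set M := maximals (⋃ k, F k) with hM
  -- a cube that is maximal in the whole family is never discarded once it has appeared
  have hstay (n : ℕ) (q : Index d) (hq : q ∈ M) (h : q ∈ G n ∪ F (n + 1)) : q ∈ G (n + 1) := by
    rw [hGs]
    refine ⟨h, fun q' hq' hsub => hq.2 q' ?_ hsub⟩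
    rcases hq' with h' | h'
    · exact hGsub n h'
    · exact mem_iUnion.2 ⟨n + 1, h'⟩
  have hmono : Monotone fun n => M ∩ G n :=
    monotone_nat_of_le_succ fun n q hq => ⟨hq.1, hstay n q hq.1 (Or.inl hq.2)⟩
  have hunion : M = ⋃ n, M ∩ G n := by
    apply Subset.antisymm
    · intro q hq
      obtain ⟨n, hn⟩ := mem_iUnion.1 hq.1
      cases n with
      | zero => exact mem_iUnion.2 ⟨0, hq, hn⟩
      | succ n => exact mem_iUnion.2 ⟨n + 1, hq, hstay n q hq (Or.inr hn)⟩
    · exact iUnion_subset fun n => inter_subset_left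
  have hcov : (⋃ n, A n) ⊆ region M := by
    rw [hM, region_maximals]
    apply iUnion_subset
    intro n x hx
    obtain ⟨q, hq, hxq⟩ := mem_region.1 (hF n hx)
    exact mem_region.2 ⟨q, mem_iUnion.2 ⟨n, hq⟩, hxq⟩
  refine (content_le s hcov).trans ?_
  rw [hunion, hmono.measure_iUnion]
  apply iSup_le
  intro n
  calc cost d s (M ∩ G n) ≤ cost d s (G n) := measure_mono inter_subset_right
    _ ≤ content s (A n) + ∑ k ∈ Finset.range (n + 1), (ε' k : ℝ≥0∞) := hGcost n
    _ ≤ (⨆ n, content s (A n)) + ε := by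
      gcongr
      · exact le_iSup (fun n => content s (A n)) n
      · exact (ENNReal.sum_le_tsum _).trans hsum.le

/-- A set of zero net content has zero Hausdorff measure. -/
lemma hausdorffMeasure_eq_zero {s : ℝ} (hs : 0 < s) {A : Set (Space d)} (h : content s A = 0) :
    μH[s] A = 0 := by
  have hlt (n : ℕ) : content s A < weight s n := h ▸ weight_pos s n
  choose F hF hFc using fun n => exists_cover (hlt n)
  have hr : Tendsto (fun n : ℕ => (d : ℝ≥0∞) * (2⁻¹ : ℝ≥0∞) ^ n) atTop (𝓝 0) := by
    have := ENNReal.Tendsto.const_mul (a := (d : ℝ≥0∞))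
      (ENNReal.tendsto_pow_atTop_nhds_zero_of_lt_one (r := 2⁻¹) (by simp))
      (Or.inr (ENNReal.natCast_ne_top d))
    simpa using this
  have hdiam (n : ℕ) (q : F n) : Metric.ediam (cube q.1) ≤ (d : ℝ≥0∞) * (2⁻¹ : ℝ≥0∞) ^ n := by
    refine (ediam_cube_le q.1).trans ?_
    gcongr 1
    apply pow_le_pow_of_le_one (by simp) (by simp)
    -- a cube lighter than `weight s n` has level above `n`
    by_contra hlt
    exact absurd ((weight_anti hs (not_le.1 hlt).le).trans (weight_le_cost s q.2))
      (not_le.2 (hFc n))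
  have hle := Measure.hausdorffMeasure_le_liminf_tsum s A (l := atTop) _ hr
    (fun n (q : F n) => cube q.1) (Eventually.of_forall hdiam)
    (Eventually.of_forall fun n => by simpa [region, iUnion_subtype] using hF n)
  have hbound (n : ℕ) : ∑' q : F n, Metric.ediam (cube q.1) ^ s ≤ (d : ℝ≥0∞) ^ s * weight s n := by
    calc ∑' q : F n, Metric.ediam (cube q.1) ^ s
        ≤ ∑' q : F n, (d : ℝ≥0∞) ^ s * weight s q.1.1 := by
          apply ENNReal.tsum_le_tsum
          intro q
          rw [weight, ← ENNReal.mul_rpow_of_nonneg _ _ hs.le]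
          exact ENNReal.rpow_le_rpow (ediam_cube_le q.1) hs.le
      _ = (d : ℝ≥0∞) ^ s * cost d s (F n) := by rw [ENNReal.tsum_mul_left, cost_eq_tsum]
      _ ≤ _ := by
          gcongr
          exact (hFc n).le
  have hlim : Tendsto (fun n => (d : ℝ≥0∞) ^ s * weight s n) atTop (𝓝 0) := by
    have := ENNReal.Tendsto.const_mul (a := (d : ℝ≥0∞) ^ s) (tendsto_weight hs)
      (Or.inr (ENNReal.rpow_ne_top_of_nonneg hs.le (ENNReal.natCast_ne_top d)))
    simpa using this
  have h0 : Tendsto (fun n => ∑' q : F n, Metric.ediam (cube q.1) ^ s) atTop (𝓝 0) :=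
    tendsto_of_tendsto_of_tendsto_of_le_of_le tendsto_const_nhds hlim (fun _ => zero_le) hbound
  rw [h0.liminf_eq] at hle
  exact le_antisymm hle zero_le

/-! ### Passing to a compact parameter set -/

/-- The index family of all neighbours of the cubes of `F`. -/
def enlarge (F : Set (Index d)) : Set (Index d) := ⋃ v ∈ nbrs d, shift v '' F

lemma cost_enlarge_le (s : ℝ) (F : Set (Index d)) :
    cost d s (enlarge F) ≤ (nbrs d).card * cost d s F := by
  refine (measure_biUnion_finset_le _ _).trans ?_
  simp [cost_shift]

lemma isCompact_box (b : ℕ → ℕ) : IsCompact {y : ℕ → ℕ | ∀ i, y i ≤ b i} := by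
  have := isCompact_univ_pi (s := fun i => Iic (b i)) fun i => (finite_Iic (b i)).isCompact
  convert this using 1
  ext y
  simp [Pi.le_def]

/-- A box in Baire space given by bounds on all coordinates has the boxes given by bounds on
finitely many coordinates as a neighbourhood base. -/
lemma exists_box_subset {b : ℕ → ℕ} {U : Set (ℕ → ℕ)} (hU : IsOpen U)
    (hb : {y | ∀ i, y i ≤ b i} ⊆ U) : ∃ k, {y : ℕ → ℕ | ∀ i < k, y i ≤ b i} ⊆ U := by
  have hC := isCompact_box b
  by_contra! hcon
  choose x hx hxU using fun k => not_subset.1 (hcon k)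
  -- truncate `x k` to a point of the compact box that agrees with it on the first `k` coordinates
  obtain ⟨z, hz, φ, hφ, hlim⟩ := hC.tendsto_subseq (x := fun k i => min (x k i) (b i))
    fun k i => min_le_right _ _
  have hlim' : Tendsto (x ∘ φ) atTop (𝓝 z) := by
    rw [tendsto_pi_nhds] at hlim ⊢
    intro i
    refine (hlim i).congr' ?_
    filter_upwards [hφ.tendsto_atTop.eventually_gt_atTop i] with n hn
    exact min_eq_left (hx (φ n) i hn)
  obtain ⟨n, hn⟩ := (hlim'.eventually (hU.mem_nhds (hb hz))).exists
  exact hxU _ hn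

/-- Capacitability: a continuous image of Baire space of positive net content contains the image
of a compact set of parameters with positive net content. -/
lemma exists_compact_content_pos {s : ℝ} {h : (ℕ → ℕ) → Space d} (hh : Continuous h)
    (hpos : 0 < content s (range h)) :
    ∃ C : Set (ℕ → ℕ), IsCompact C ∧ 0 < content s (h '' C) := by
  obtain ⟨ε, hε0, hε⟩ := exists_between hpos
  have hstep (k : ℕ) (S : Set (ℕ → ℕ)) (hS : ε < content s (h '' S)) :
      ∃ n, ε < content s (h '' (S ∩ {y | y k ≤ n})) := by
    have hm : Monotone fun n => h '' (S ∩ {y | y k ≤ n}) := by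
      intro m n hmn
      apply image_mono
      exact inter_subset_inter_right S fun y hy => le_trans hy hmn
    have hU : h '' S = ⋃ n, h '' (S ∩ {y | y k ≤ n}) := by
      rw [← image_iUnion, ← inter_iUnion]
      congr 1
      rw [eq_comm, inter_eq_left]
      exact fun y _ => mem_iUnion.2 ⟨y k, le_refl (y k)⟩
    rw [hU] at hS
    exact lt_iSup_iff.1 (hS.trans_le (content_iUnion_of_monotone s hm))
  choose n hn using hstep
  let S : ℕ → {S : Set (ℕ → ℕ) // ε < content s (h '' S)} := fun k =>
    Nat.rec ⟨univ, by rwa [image_univ]⟩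
      (fun k S => ⟨S.1 ∩ {y | y k ≤ n k S.1 S.2}, hn k S.1 S.2⟩) k
  let b : ℕ → ℕ := fun k => n k (S k).1 (S k).2
  have hS0 : (S 0).1 = univ := rfl
  have hSs (k : ℕ) : (S (k + 1)).1 = (S k).1 ∩ {y | y k ≤ b k} := rfl
  have hSk (k : ℕ) : (S k).1 = {y | ∀ i < k, y i ≤ b i} := by
    induction k with
    | zero => simp [hS0]
    | succ k ih =>
      rw [hSs, ih]
      ext y
      simp only [mem_inter_iff, mem_ofPred_eq, Nat.forall_lt_succ_right]
  refine ⟨{y | ∀ i, y i ≤ b i}, isCompact_box b, ?_⟩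
  rw [pos_iff_ne_zero]
  intro h0
  have hcard : ((nbrs d).card : ℝ≥0∞) ≠ ∞ := ENNReal.natCast_ne_top _
  obtain ⟨F, hF, hFc⟩ := exists_cover (r := ε / (nbrs d).card)
    (h0 ▸ ENNReal.div_pos hε0.ne' hcard)
  let V : Set (Space d) := ⋃ q ∈ F, Metric.thickening ((2⁻¹ : ℝ) ^ q.1) (cube q)
  have hVo : IsOpen V := isOpen_biUnion fun q _ => Metric.isOpen_thickening
  have hVF : V ⊆ region (enlarge F) := by
    apply iUnion₂_subset
    intro q hq y hy
    obtain ⟨x, hx, hxy⟩ := Metric.mem_thickening_iff.1 hy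
    rw [dist_comm] at hxy
    obtain ⟨v, hv, hyv⟩ := exists_nbr hx hxy
    exact mem_region.2 ⟨shift v q, mem_iUnion₂.2 ⟨v, hv, q, hq, rfl⟩, hyv⟩
  have hsub : {y | ∀ i, y i ≤ b i} ⊆ h ⁻¹' V := by
    intro y hy
    obtain ⟨q, hq, hyq⟩ := mem_region.1 (hF (mem_image_of_mem h hy))
    exact mem_iUnion₂.2 ⟨q, hq, Metric.self_subset_thickening (by positivity) _ hyq⟩
  obtain ⟨k, hk⟩ := exists_box_subset (hVo.preimage hh) hsub
  rw [← hSk k] at hk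
  have hlt := (S k).2
  refine lt_irrefl ε (hlt.trans_le ?_)
  calc content s (h '' (S k).1) ≤ cost d s (enlarge F) :=
        content_le s ((image_subset_iff.2 hk).trans hVF)
    _ ≤ (nbrs d).card * cost d s F := cost_enlarge_le s F
    _ ≤ (nbrs d).card * (ε / (nbrs d).card) := by gcongr
    _ ≤ ε := ENNReal.mul_div_le

/-! ### Frostman measures -/

/-- Frostman's lemma at finitely many levels: a measure carried by `K` that obeys the weight bound
on the cubes of levels `j, …, j + m` and still dominates the content of `K` on the cubes of
level `j`. Point masses are placed in the finest cubes and then scaled down, from the finer to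
the coarser levels, on each cube where the bound is violated. -/
lemma exists_measure_levels {s : ℝ} (hs : 0 < s) {K : Set (Space d)} (hK : MeasurableSet K)
    (m : ℕ) : ∀ j : ℕ, ∃ μ : Measure (Space d), μ Kᶜ = 0 ∧
      (∀ q : Index d, j ≤ q.1 → q.1 ≤ j + m → μ (cube q) ≤ weight s q.1) ∧
      ∀ q : Index d, q.1 = j → content s (K ∩ cube q) ≤ μ (cube q) := by
  classical
  induction m with
  | zero =>
    intro j
    let p : (Fin d → ℤ) → Measure (Space d) := fun z =>
      if h : (K ∩ cube (j, z)).Nonempty then weight s j • Measure.dirac h.some else 0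
    have hp0 (z : Fin d → ℤ) (A : Set (Space d)) (hA : MeasurableSet A)
        (hd : Disjoint A (K ∩ cube (j, z))) : p z A = 0 := by
      by_cases h : (K ∩ cube (j, z)).Nonempty
      · have : h.some ∉ A := fun hm => disjoint_left.1 hd hm h.some_mem
        simp [p, h, hA, this]
      · simp [p, h]
    have hcube (z : Fin d → ℤ) : Measure.sum p (cube (j, z)) = p z (cube (j, z)) := by
      rw [Measure.sum_apply _ (measurableSet_cube _)]
      refine tsum_eq_single z fun z' hz' => hp0 z' _ (measurableSet_cube _) ?_
      rw [disjoint_left]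
      intro x hx hx'
      exact hz' (congrArg Prod.snd (eq_of_mem_cube hx'.2 hx rfl))
    refine ⟨Measure.sum p, ?_, ?_, ?_⟩
    · rw [Measure.sum_apply _ hK.compl, ENNReal.tsum_eq_zero]
      intro z
      exact hp0 z _ hK.compl (disjoint_compl_left.mono_right inter_subset_left)
    · rintro ⟨k, z⟩ h1 h2
      obtain rfl : k = j := le_antisymm h2 h1
      rw [hcube]
      by_cases h : (K ∩ cube (k, z)).Nonempty
      · simp only [p, h, dif_pos, Measure.smul_apply, smul_eq_mul]
        exact mul_le_of_le_one_right' prob_le_one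
      · simp [p, h]
    · rintro ⟨k, z⟩ h1
      obtain rfl : k = j := h1
      rw [hcube]
      by_cases h : (K ∩ cube (k, z)).Nonempty
      · have hmem : h.some ∈ cube (k, z) := h.some_mem.2
        simp only [p, h, dif_pos, Measure.smul_apply, smul_eq_mul]
        rw [Measure.dirac_apply_of_mem hmem, mul_one]
        exact content_cube_le s inter_subset_right
      · rw [not_nonempty_iff_eq_empty.1 h]
        refine (content_le s (F := ∅) (empty_subset _)).trans ?_
        simp
  | succ m ih =>
    intro j
    obtain ⟨μ, hμK, hμw, hμc⟩ := ih (j + 1)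
    let a : (Fin d → ℤ) → ℝ≥0∞ := fun z => min 1 (weight s j / μ (cube (j, z)))
    let ρ : Measure (Space d) := Measure.sum fun z => a z • μ.restrict (cube (j, z))
    have hρ (z : Fin d → ℤ) {A : Set (Space d)} (hA : MeasurableSet A) (hsub : A ⊆ cube (j, z)) :
        ρ A = a z * μ A := by
      simp only [ρ]
      rw [Measure.sum_apply _ hA, tsum_eq_single z]
      · rw [Measure.smul_apply, Measure.restrict_apply hA, inter_eq_left.2 hsub, smul_eq_mul]
      · intro z' hz'
        have : A ∩ cube (j, z') = ∅ := by
          rw [eq_empty_iff_forall_notMem]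
          rintro x ⟨hx, hx'⟩
          exact hz' (congrArg Prod.snd (eq_of_mem_cube hx' (hsub hx) rfl))
        rw [Measure.smul_apply, Measure.restrict_apply hA, this, measure_empty, smul_zero]
    have hfin (z : Fin d → ℤ) : μ (cube (j, z)) ≠ ∞ := by
      have hsub : cube (j, z) ⊆ ⋃ z' ∈ Finset.Icc (2 * z) (2 * z + 1), cube (j + 1, z') := by
        intro x hx
        refine mem_iUnion₂.2 ⟨_, ?_, mem_cube_code (j + 1) x⟩
        have hi (i : Fin d) : z i = ⌊(2 : ℝ) ^ (j + 1) * x i⌋ / 2 := by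
          have := floor_coarse (Nat.le_succ j) (x i)
          rw [hx i] at this
          simpa using this
        rw [Finset.mem_Icc]
        constructor <;> intro i <;> simp only [Pi.mul_apply, Pi.add_apply, Pi.ofNat_apply] <;> have := hi i <;> omega
      refine ((measure_mono hsub).trans_lt ?_).ne
      refine (measure_biUnion_finset_le _ _).trans_lt ?_
      rw [ENNReal.sum_lt_top]
      intro z' _
      exact (hμw (j + 1, z') le_rfl (Nat.le_add_right _ _)).trans_lt (weight_ne_top hs _).lt_top
    have hlevel (z : Fin d → ℤ) : ρ (cube (j, z)) = min (μ (cube (j, z))) (weight s j) := by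
      rw [hρ z (measurableSet_cube _) Subset.rfl]
      by_cases h0 : μ (cube (j, z)) = 0
      · simp [h0]
      · rw [show a z = min 1 (weight s j / μ (cube (j, z))) from rfl,
          (mul_left_mono (a := μ (cube (j, z)))).map_min, one_mul,
          ENNReal.div_mul_cancel h0 (hfin z)]
    refine ⟨ρ, ?_, ?_, ?_⟩
    · rw [Measure.sum_apply _ hK.compl, ENNReal.tsum_eq_zero]
      intro z
      rw [Measure.smul_apply, Measure.restrict_apply hK.compl,
        measure_mono_null inter_subset_left hμK, smul_zero]
    · rintro ⟨k, z⟩ h1 h2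
      rcases h1.eq_or_lt with h | h
      · obtain rfl : j = k := h
        rw [hlevel]
        exact min_le_right _ _
      · rcases (cube (k, z)).eq_empty_or_nonempty with he | ⟨x, hx⟩
        · simp [he]
        · rw [hρ _ (measurableSet_cube _) (cube_subset (mem_cube_code j x) hx h.le)]
          refine (mul_le_of_le_one_left' (min_le_left _ _)).trans (hμw (k, z) h ?_)
          simp only at h2 ⊢
          omega
    · rintro ⟨k, z⟩ h1
      obtain rfl : k = j := h1
      rw [hlevel]
      refine le_min ?_ (content_cube_le s inter_subset_right)
      have hsplit (B : Set (Space d)) : B = ⋃ z', B ∩ cube (k + 1, z') := by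
        rw [← inter_iUnion, eq_comm, inter_eq_left]
        exact fun x _ => mem_iUnion.2 ⟨_, mem_cube_code (k + 1) x⟩
      calc content s (K ∩ cube (k, z))
          = content s (⋃ z', (K ∩ cube (k, z)) ∩ cube (k + 1, z')) := by rw [← hsplit]
        _ ≤ ∑' z', content s ((K ∩ cube (k, z)) ∩ cube (k + 1, z')) := content_iUnion_le s _
        _ ≤ ∑' z', μ (cube (k, z) ∩ cube (k + 1, z')) := by
          apply ENNReal.tsum_le_tsum
          intro z'
          rcases (cube (k, z) ∩ cube (k + 1, z')).eq_empty_or_nonempty with he | ⟨x, hx, hx'⟩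
          · rw [inter_assoc, he, inter_empty]
            refine (content_le s (F := ∅) (empty_subset _)).trans ?_
            simp
          · have hsub := cube_subset hx hx' (Nat.le_succ k)
            rw [inter_assoc, inter_eq_right.2 hsub]
            exact hμc (k + 1, z') rfl
        _ = μ (⋃ z', cube (k, z) ∩ cube (k + 1, z')) := by
          rw [measure_iUnion]
          · intro z₁ z₂ hne
            rw [Function.onFun, disjoint_left]
            intro x hx hx'
            exact hne (congrArg Prod.snd (eq_of_mem_cube hx.2 hx'.2 rfl))
          · exact fun z' => (measurableSet_cube _).inter (measurableSet_cube _)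
        _ = μ (cube (k, z)) := by rw [← hsplit]

lemma measure_ball_le_of_cubes {s : ℝ} {μ : Measure (Space d)} {c : ℝ≥0∞} {k : ℕ}
    (h : ∀ q : Index d, q.1 = k → μ (cube q) ≤ c * weight s k) (x : Space d) :
    μ (Metric.ball x ((2⁻¹ : ℝ) ^ k)) ≤ (nbrs d).card * (c * weight s k) := by
  have hsub : Metric.ball x ((2⁻¹ : ℝ) ^ k) ⊆ ⋃ v ∈ nbrs d, cube (shift v (code k x)) := by
    intro y hy
    obtain ⟨v, hv, hyv⟩ := exists_nbr (mem_cube_code k x) (Metric.mem_ball'.1 hy)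
    exact mem_iUnion₂.2 ⟨v, hv, hyv⟩
  refine (measure_mono hsub).trans ((measure_biUnion_finset_le _ _).trans ?_)
  refine (Finset.sum_le_card_nsmul _ _ _ fun v _ => h _ rfl).trans ?_
  rw [nsmul_eq_mul]

/-- Frostman's lemma: a compact set of positive net content carries a probability measure whose
mass on a ball of radius `2⁻ᵏ` is at most a constant times `(2⁻ᵏ)ˢ`. -/
lemma exists_frostman {s : ℝ} (hs : 0 < s) {K : Set (Space d)} (hK : IsCompact K)
    (hpos : 0 < content s K) :
    ∃ (μ : Measure (Space d)) (c : ℝ≥0∞), IsProbabilityMeasure μ ∧ c ≠ ∞ ∧ μ Kᶜ = 0 ∧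
      ∀ (x : Space d) (k : ℕ), μ (Metric.ball x ((2⁻¹ : ℝ) ^ k)) ≤ c * weight s k := by
  obtain ⟨z, hz⟩ : ∃ z : Fin d → ℤ, 0 < content s (K ∩ cube (0, z)) := by
    by_contra! hcon
    have hsplit : K = ⋃ z : Fin d → ℤ, K ∩ cube (0, z) := by
      rw [← inter_iUnion, eq_comm, inter_eq_left]
      exact fun x _ => mem_iUnion.2 ⟨_, mem_cube_code 0 x⟩
    rw [hsplit] at hpos
    refine hpos.not_ge ((content_iUnion_le s _).trans ?_)
    rw [nonpos_iff_eq_zero, ENNReal.tsum_eq_zero]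
    exact fun z => nonpos_iff_eq_zero.1 (hcon z)
  set κ := content s (K ∩ cube (0, z)) with hκ
  choose μ hμK hμw hμc using fun m => exists_measure_levels hs hK.measurableSet m 0
  have hlow (n : ℕ) : κ ≤ μ n (cube (0, z)) := hμc n (0, z) rfl
  have hup (n : ℕ) : μ n (cube (0, z)) ≠ ∞ :=
    ((hμw n (0, z) le_rfl (Nat.zero_le _)).trans_lt (weight_ne_top hs 0).lt_top).ne
  have hprob (n : ℕ) : IsProbabilityMeasure (ProbabilityTheory.cond (μ n) (cube (0, z))) :=
    ProbabilityTheory.cond_isProbabilityMeasure_of_finite (hz.trans_le (hlow n)).ne' (hup n)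
  have hcondle (n : ℕ) {A : Set (Space d)} (hA : MeasurableSet A) :
      ProbabilityTheory.cond (μ n) (cube (0, z)) A ≤ κ⁻¹ * μ n A := by
    rw [ProbabilityTheory.cond_apply (measurableSet_cube _)]
    gcongr
    · exact hlow n
    · exact inter_subset_right
  let P : ℕ → ProbabilityMeasure (Space d) := fun n => ⟨_, hprob n⟩
  have hcomp : IsCompact {ν : ProbabilityMeasure (Space d) | ∀ _n : ℕ, ν Kᶜ ≤ 0} :=
    isCompact_setOfPred_probabilityMeasure_mass_eq_compl_isCompact_le (u := fun _ => 0)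
      (K := fun _ => K) tendsto_const_nhds (fun _ => hK) (Or.inl inferInstance)
  have hPmem (n : ℕ) : P n ∈ {ν : ProbabilityMeasure (Space d) | ∀ _n : ℕ, ν Kᶜ ≤ 0} := by
    intro _
    rw [← ENNReal.coe_le_coe, ProbabilityMeasure.ennreal_coeFn_eq_coeFn_toMeasure]
    refine (hcondle n hK.measurableSet.compl).trans ?_
    simp [hμK n]
  let L : Ultrafilter ℕ := Ultrafilter.of atTop
  have hL : (L : Filter ℕ) ≤ atTop := Ultrafilter.of_le atTop
  obtain ⟨ν, hν, hlim⟩ := hcomp.ultrafilter_le_nhds (L.map P)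
    (le_principal_iff.2 (Filter.mem_map.2 (Eventually.of_forall hPmem)))
  have htend : Tendsto P L (𝓝 ν) := hlim
  refine ⟨ν, (nbrs d).card * κ⁻¹, inferInstance,
    ENNReal.mul_ne_top (ENNReal.natCast_ne_top _) (ENNReal.inv_ne_top.2 hz.ne'), ?_, ?_⟩
  · have := hν 0
    rw [← ENNReal.coe_le_coe, ProbabilityMeasure.ennreal_coeFn_eq_coeFn_toMeasure] at this
    simpa using this
  · intro x k
    refine (ProbabilityMeasure.le_liminf_measure_open_of_tendsto htend Metric.isOpen_ball).trans ?_
    refine liminf_le_of_frequently_le' (Eventually.frequently ?_)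
    filter_upwards [hL (eventually_ge_atTop k)] with n hn
    rw [mul_assoc]
    apply measure_ball_le_of_cubes
    intro q hq
    refine (hcondle n (measurableSet_cube q)).trans ?_
    gcongr
    rw [← hq]
    exact hμw n q (Nat.zero_le _) (by rw [hq, zero_add]; exact hn)

/-- The mass distribution principle. -/
lemma hausdorffMeasure_ne_zero {s : ℝ} (hs : 0 < s) {μ : Measure (Space d)} {c : ℝ≥0∞}
    (hc : c ≠ ∞)
    (hμ : ∀ (x : Space d) (k : ℕ), μ (Metric.ball x ((2⁻¹ : ℝ) ^ k)) ≤ c * weight s k)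
    {A : Set (Space d)} (hA : μ A ≠ 0) : μH[s] A ≠ 0 := by
  set D : ℝ≥0∞ := (c + 1) * 2 ^ s with hD
  have h2 : (2 : ℝ≥0∞) ^ s ≠ ∞ := ENNReal.rpow_ne_top_of_nonneg hs.le (by simp)
  have hDtop : D ≠ ∞ := ENNReal.mul_ne_top (by simp [hc]) h2
  have hD0 : D ≠ 0 := by
    refine mul_ne_zero (by simp) ?_
    exact (ENNReal.rpow_pos (by simp) (by simp)).ne'
  have key (S : Set (Space d)) (hS : Metric.ediam S ≤ 2⁻¹) : μ S ≤ D * Metric.ediam S ^ s := by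
    rcases S.eq_empty_or_nonempty with rfl | ⟨x, hx⟩
    · simp
    have hball (k : ℕ) (hk : Metric.ediam S < (2⁻¹ : ℝ≥0∞) ^ k) : μ S ≤ c * weight s k := by
      refine (measure_mono fun y hy => ?_).trans (hμ x k)
      have h1 : edist y x < (2⁻¹ : ℝ≥0∞) ^ k := (Metric.edist_le_ediam_of_mem hy hx).trans_lt hk
      rw [Metric.mem_ball, ← ENNReal.ofReal_lt_ofReal_iff (by positivity), ← edist_dist,
        ENNReal.ofReal_pow (by positivity), ENNReal.ofReal_inv_of_pos (by norm_num)]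
      simpa using h1
    by_cases h0 : Metric.ediam S = 0
    · have hlim : Tendsto (fun k => c * weight s k) atTop (𝓝 0) := by
        simpa using ENNReal.Tendsto.const_mul (tendsto_weight hs) (Or.inr hc)
      have : μ S ≤ 0 := ge_of_tendsto' hlim fun k =>
        hball k (h0 ▸ ENNReal.pow_pos (by simp) k)
      exact this.trans zero_le
    · -- the first level `k + 1` whose side does not exceed the diameter
      classical
      have hex : ∃ k : ℕ, (2⁻¹ : ℝ≥0∞) ^ k ≤ Metric.ediam S := by
        have h1 : Tendsto (fun k : ℕ => (2⁻¹ : ℝ≥0∞) ^ k) atTop (𝓝 0) :=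
          ENNReal.tendsto_pow_atTop_nhds_zero_of_lt_one (by simp)
        obtain ⟨k, hk⟩ := (h1.eventually (gt_mem_nhds (pos_iff_ne_zero.2 h0))).exists
        exact ⟨k, hk.le⟩
      obtain ⟨k, hk⟩ : ∃ k, Nat.find hex = k + 1 := by
        apply Nat.exists_eq_succ_of_ne_zero
        intro h
        have := Nat.find_spec hex
        rw [h, pow_zero] at this
        exact absurd (this.trans hS) (by simp)
      have hle : (2⁻¹ : ℝ≥0∞) ^ (k + 1) ≤ Metric.ediam S := hk ▸ Nat.find_spec hex
      have hlt : Metric.ediam S < (2⁻¹ : ℝ≥0∞) ^ k :=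
        not_le.1 (Nat.find_min hex (hk ▸ Nat.lt_succ_self k))
      have hw : weight s k = 2 ^ s * weight s (k + 1) := by
        rw [weight, weight, ← ENNReal.mul_rpow_of_nonneg _ _ hs.le, pow_succ, mul_comm _ 2⁻¹,
          ← mul_assoc, ENNReal.mul_inv_cancel (by simp) (by simp), one_mul]
      calc μ S ≤ c * weight s k := hball k hlt
        _ ≤ (c + 1) * weight s k := by gcongr; exact le_self_add
        _ = D * weight s (k + 1) := by rw [hw, hD, mul_assoc]
        _ ≤ D * Metric.ediam S ^ s := by
          gcongr
          exact ENNReal.rpow_le_rpow hle hs.le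
  have hle : D⁻¹ • μ ≤ μH[s] := by
    refine Measure.le_hausdorffMeasure s _ 2⁻¹ (by simp) fun S hS => ?_
    rw [Measure.smul_apply, smul_eq_mul]
    calc D⁻¹ * μ S ≤ D⁻¹ * (D * Metric.ediam S ^ s) := by gcongr; exact key S hS
      _ = _ := by rw [← mul_assoc, ENNReal.inv_mul_cancel hD0 hDtop, one_mul]
  intro h
  have := hle A
  rw [h, Measure.smul_apply, smul_eq_mul, nonpos_iff_eq_zero, mul_eq_zero] at this
  exact this.elim (ENNReal.inv_ne_zero.2 hDtop) hA

/-! ### Making the parametrization injective -/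

/-- One step of a Lusin-type argument: at the cost of a small amount of mass, a compact parameter
set can be shrunk so that the `n`-th coordinate of a parameter depends only on its image. The least
possible value of this coordinate partitions the image into finitely many Borel pieces, and these
are approximated from inside by compact sets. -/
lemma exists_compact_coord {X : Type} [TopologicalSpace X] [T2Space X] [MeasurableSpace X]
    [BorelSpace X] (μ : Measure X) [IsFiniteMeasure μ] [μ.InnerRegularCompactLTTop]
    {h : (ℕ → ℕ) → X} (hh : Continuous h) (n : ℕ) {C : Set (ℕ → ℕ)} (hC : IsCompact C)
    {ε : ℝ≥0∞} (hε : ε ≠ 0) :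
    ∃ C' ⊆ C, IsCompact C' ∧ (∀ x ∈ C', ∀ y ∈ C', h x = h y → x n = y n) ∧
      μ (h '' C \ h '' C') ≤ ε := by
  obtain ⟨N, hN⟩ : ∃ N, ∀ y ∈ C, y n < N := by
    obtain ⟨N, hN⟩ := (hC.image (continuous_apply n)).bddAbove
    exact ⟨N + 1, fun y hy => Nat.lt_succ_of_le (hN ⟨y, hy, rfl⟩)⟩
  have hCi (i : ℕ) : IsCompact (C ∩ {y | y n = i}) :=
    hC.inter_right (isClosed_eq (continuous_apply n) continuous_const)
  have hIm (i : ℕ) : MeasurableSet (h '' (C ∩ {y | y n = i})) :=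
    ((hCi i).image hh).measurableSet
  let B : ℕ → Set X := disjointed fun i => h '' (C ∩ {y | y n = i})
  have hBm (i : ℕ) : MeasurableSet (B i) := MeasurableSet.disjointed hIm i
  have hBsub (i : ℕ) : B i ⊆ h '' (C ∩ {y | y n = i}) := disjointed_subset _ i
  have hBdisj : Pairwise (Function.onFun Disjoint B) := disjoint_disjointed _
  obtain ⟨ε', hε', hsum⟩ := ENNReal.exists_pos_sum_of_countable hε ℕ
  have hin (i : ℕ) : ∃ L ⊆ B i, IsCompact L ∧ μ (B i \ L) < ε' i :=
    (hBm i).exists_isCompact_sdiff_lt (measure_ne_top _ _) (ENNReal.coe_ne_zero.2 (hε' i).ne')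
  choose L hLB hLc hLμ using hin
  refine ⟨⋃ i ∈ Finset.range N, (C ∩ {y | y n = i}) ∩ h ⁻¹' L i, ?_, ?_, ?_, ?_⟩
  · exact iUnion₂_subset fun i _ y hy => hy.1.1
  · exact (Finset.range N).isCompact_biUnion fun i _ =>
      (hCi i).inter_right ((hLc i).isClosed.preimage hh)
  · intro x hx y hy hxy
    obtain ⟨i, _, ⟨_, hxi⟩, hxL⟩ := mem_iUnion₂.1 hx
    obtain ⟨j, _, ⟨_, hyj⟩, hyL⟩ := mem_iUnion₂.1 hy
    have hij : i = j := by
      by_contra hne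
      refine disjoint_left.1 (hBdisj hne) (hLB i hxL) ?_
      rw [hxy]
      exact hLB j hyL
    exact (show x n = i from hxi).trans (hij.trans (show y n = j from hyj).symm)
  · have hsub : h '' C \ h '' (⋃ i ∈ Finset.range N, (C ∩ {y | y n = i}) ∩ h ⁻¹' L i) ⊆
        ⋃ i, B i \ L i := by
      rintro _ ⟨⟨y, hy, rfl⟩, hnot⟩
      have hmem : h y ∈ ⋃ i, B i := by
        rw [iUnion_disjointed]
        exact mem_iUnion.2 ⟨y n, y, ⟨hy, rfl⟩, rfl⟩
      obtain ⟨i, hi⟩ := mem_iUnion.1 hmem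
      refine mem_iUnion.2 ⟨i, hi, fun hL => hnot ?_⟩
      obtain ⟨y', ⟨hy'C, hy'i⟩, hy'⟩ := hBsub i hi
      have hiN : i < N := (show y' n = i from hy'i) ▸ hN y' hy'C
      exact ⟨y', mem_iUnion₂.2 ⟨i, Finset.mem_range.2 hiN, ⟨hy'C, hy'i⟩,
        by rwa [mem_preimage, hy']⟩, hy'⟩
    calc _ ≤ μ (⋃ i, B i \ L i) := measure_mono hsub
      _ ≤ ∑' i, μ (B i \ L i) := measure_iUnion_le _
      _ ≤ ∑' i, (ε' i : ℝ≥0∞) := ENNReal.tsum_le_tsum fun i => (hLμ i).le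
      _ ≤ ε := hsum.le

/-- A compact parameter set whose image has positive mass contains a compact set on which the
parametrization is injective and whose image still has positive mass. -/
lemma exists_compact_injOn {X : Type} [TopologicalSpace X] [T2Space X] [MeasurableSpace X]
    [BorelSpace X] (μ : Measure X) [IsFiniteMeasure μ] [μ.InnerRegularCompactLTTop]
    {h : (ℕ → ℕ) → X} (hh : Continuous h) {C : Set (ℕ → ℕ)} (hC : IsCompact C)
    (hpos : μ (h '' C) ≠ 0) :
    ∃ D ⊆ C, IsCompact D ∧ InjOn h D ∧ μ (h '' D) ≠ 0 := by
  obtain ⟨ε, hε, hsum⟩ := ENNReal.exists_pos_sum_of_countable hpos ℕ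
  have hstep (n : ℕ) (S : {S : Set (ℕ → ℕ) // IsCompact S}) :
      ∃ S' : {S : Set (ℕ → ℕ) // IsCompact S}, S'.1 ⊆ S.1 ∧
        (∀ x ∈ S'.1, ∀ y ∈ S'.1, h x = h y → x n = y n) ∧ μ (h '' S.1 \ h '' S'.1) ≤ ε n := by
    obtain ⟨C', h1, h2, h3, h4⟩ :=
      exists_compact_coord μ hh n S.2 (ENNReal.coe_ne_zero.2 (hε n).ne')
    exact ⟨⟨C', h2⟩, h1, h3, h4⟩
  choose next hsub hinj hμ using hstep
  let S : ℕ → {S : Set (ℕ → ℕ) // IsCompact S} := fun n => Nat.rec ⟨C, hC⟩ next n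
  have hS0 : (S 0).1 = C := rfl
  have hSs (n : ℕ) : S (n + 1) = next n (S n) := rfl
  have hanti (n : ℕ) : (S (n + 1)).1 ⊆ (S n).1 := by
    rw [hSs]
    exact hsub n (S n)
  refine ⟨⋂ n, (S n).1, iInter_subset _ 0, ?_, ?_, ?_⟩
  · exact (S 0).2.of_isClosed_subset (isClosed_iInter fun n => (S n).2.isClosed) (iInter_subset _ 0)
  · intro x hx y hy hxy
    funext n
    have hx' := mem_iInter.1 hx (n + 1)
    have hy' := mem_iInter.1 hy (n + 1)
    rw [hSs] at hx' hy'
    exact hinj n (S n) x hx' y hy' hxy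
  · have himage : (⋂ n, h '' (S n).1) ⊆ h '' (⋂ n, (S n).1) := by
      intro x hx
      have hne := IsCompact.nonempty_iInter_of_sequence_nonempty_isCompact_isClosed
        (fun n => (S n).1 ∩ h ⁻¹' {x}) (fun n => inter_subset_inter_left _ (hanti n))
        (fun n => by
          obtain ⟨y, hy, hyx⟩ := mem_iInter.1 hx n
          exact ⟨y, hy, hyx⟩)
        ((S 0).2.inter_right (isClosed_singleton.preimage hh))
        (fun n => (S n).2.isClosed.inter (isClosed_singleton.preimage hh))
      obtain ⟨y, hy⟩ := hne
      exact ⟨y, mem_iInter.2 fun n => (mem_iInter.1 hy n).1, (mem_iInter.1 hy 0).2⟩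
    intro hzero
    have hcov : h '' C ⊆ h '' (⋂ n, (S n).1) ∪ ⋃ n, h '' (S n).1 \ h '' (S (n + 1)).1 := by
      intro x hx
      by_cases hall : ∀ n, x ∈ h '' (S n).1
      · exact Or.inl (himage (mem_iInter.2 hall))
      · right
        by_contra hnot
        apply hall
        intro n
        induction n with
        | zero => exact hx
        | succ n ih =>
          by_contra hn
          exact hnot (mem_iUnion.2 ⟨n, ih, hn⟩)
    have : μ (h '' C) < μ (h '' C) := by
      calc μ (h '' C)
          ≤ μ (h '' (⋂ n, (S n).1)) + μ (⋃ n, h '' (S n).1 \ h '' (S (n + 1)).1) :=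
            (measure_mono hcov).trans (measure_union_le _ _)
        _ ≤ 0 + ∑' n, (ε n : ℝ≥0∞) := by
          rw [hzero]
          gcongr
          refine (measure_iUnion_le _).trans (ENNReal.tsum_le_tsum fun n => ?_)
          rw [hSs]
          exact hμ n (S n)
        _ < μ (h '' C) := by rwa [zero_add]
    exact lt_irrefl _ this

end AnalyticUniformization

end

open AnalyticUniformization

/-- **Continuous uniformization on a compact set of large Hausdorff dimension.**
If `R ⊆ ℝ^d × (ℕ → ℕ)` is analytic (Σ¹₁) and `dom R = {x : ∃ y, (x,y) ∈ R}` has Hausdorff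
dimension at least `δ`, then for every `δ' < δ` there are a compact `K ⊆ dom R` with
`dimH K ≥ δ'` and a continuous `f : K → (ℕ → ℕ)` with `(x, f x) ∈ R` for every `x ∈ K`. -/
theorem analytic_uniformization_dimH {d : ℕ} (hd : 1 ≤ d)
    (R : Set (EuclideanSpace ℝ (Fin d) × (ℕ → ℕ)))
    (hR : MeasureTheory.AnalyticSet R)
    (δ δ' : ℝ≥0∞) (hδ : δ ≤ dimH {x | ∃ y, (x, y) ∈ R}) (hδ' : δ' < δ) :
    ∃ K : Set (EuclideanSpace ℝ (Fin d)), IsCompact K ∧ K ⊆ {x | ∃ y, (x, y) ∈ R} ∧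
      δ' ≤ dimH K ∧
      ∃ f : K → (ℕ → ℕ), Continuous f ∧
        ∀ x : K, ((x : EuclideanSpace ℝ (Fin d)), f x) ∈ R := by
  obtain ⟨s, hs1, hs2⟩ := ENNReal.lt_iff_exists_nnreal_btwn.1 (hδ'.trans_le hδ)
  have hs : (0 : ℝ) < s := by
    have : (0 : ℝ≥0∞) < s := zero_le.trans_lt hs1
    exact_mod_cast this
  rw [AnalyticSet] at hR
  rcases hR with rfl | ⟨g, hg, rfl⟩
  · simp at hs2
  have hdom : {x | ∃ y, (x, y) ∈ range g} = range fun t => (g t).1 := by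
    ext x
    constructor
    · rintro ⟨y, t, ht⟩
      exact ⟨t, by simp [ht]⟩
    · rintro ⟨t, rfl⟩
      exact ⟨(g t).2, t, rfl⟩
  rw [hdom] at hs2 ⊢
  have hh : Continuous fun t => (g t).1 := continuous_fst.comp hg
  have hpos : 0 < content (s : ℝ) (range fun t => (g t).1) := by
    rw [pos_iff_ne_zero]
    intro h0
    have := hausdorffMeasure_of_lt_dimH hs2
    rw [hausdorffMeasure_eq_zero hs h0] at this
    exact ENNReal.zero_ne_top this
  obtain ⟨C, hC, hCpos⟩ := exists_compact_content_pos hh hpos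
  obtain ⟨μ, c, hprob, hc, hμK, hμ⟩ := exists_frostman hs (hC.image hh) hCpos
  have hμC : μ ((fun t => (g t).1) '' C) ≠ 0 := by
    intro h0
    have h1 := measure_union_le (μ := μ) ((fun t => (g t).1) '' C) ((fun t => (g t).1) '' C)ᶜ
    rw [union_compl_self, measure_univ, h0, hμK] at h1
    simp at h1
  obtain ⟨D, -, hD, hinj, hμD⟩ := exists_compact_injOn μ hh hC hμC
  refine ⟨(fun t => (g t).1) '' D, hD.image hh, image_subset_range _ _, ?_, ?_⟩
  · exact hs1.le.trans (le_dimH_of_hausdorffMeasure_ne_zero (hausdorffMeasure_ne_zero hs hc hμ hμD))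
  · -- on the compact set `D` the injective parametrization is a homeomorphism onto its image
    have : CompactSpace D := isCompact_iff_compactSpace.1 hD
    let e : D ≃ (fun t => (g t).1) '' D := Equiv.Set.imageOfInjOn _ D hinj
    have he : Continuous e := (hh.comp continuous_subtype_val).subtype_mk _
    let e' : D ≃ₜ (fun t => (g t).1) '' D := he.homeoOfEquivCompactToT2
    refine ⟨fun x => (g (e'.symm x)).2, ?_, fun x => ⟨e'.symm x, ?_⟩⟩
    · exact continuous_snd.comp (hg.comp (continuous_subtype_val.comp e'.symm.continuous))
    · refine Prod.ext ?_ rfl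
      exact congrArg Subtype.val (e'.apply_symm_apply x)
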